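/- arXiv:1708.06659 — 3 statements merged into one kernel-verified Lean document; each statement's English description precedes it below -/
import Mathlib

section
/- Let d, N ∈ ℕ, 1 < p ≤ r < 2, let Q ⊂ ℝ^d be a cube with sidelength R > 0, and let w : ℝ^d → ℝ^N be twice continuously differentiable on a neighborhood of the closure of 5Q. Then for every h ∈ ℝ^d with 0 < |h| ≤ R: |h|^{−2r} ⨍_Q |w(x+2h) − 2w(x+h) + w(x)|^r dx ≤ 5^d ⨍_{5Q}|∇²w|^r, and ⨍_{5Q}|∇²w|^r ≤ (⨍_{5Q}|∇w|^{p−2}|∇²w|²)^{r/2} (⨍_{5Q}|∇w|^{r(2−p)/(2−r)})^{(2−r)/2}, where the integral ⨍_{5Q}|∇w|^{p−2}|∇²w|² is interpreted as an integral with values in [0,∞] (the integrand being 0 where ∇²w vanishes and +∞ where ∇w vanishes but ∇²w does not), the inequality holding trivially when the right-hand side is infinite. -/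
open MeasureTheory Metric
open scoped ENNReal

noncomputable section

/-- The open axis-parallel cube with center `c` and sidelength `R`. -/
def cube {d : ℕ} (c : EuclideanSpace ℝ (Fin d)) (R : ℝ) : Set (EuclideanSpace ℝ (Fin d)) :=
  {x | ∀ i, |x i - c i| < R / 2}

/-- Frobenius norm of the first derivative array of `w` at `x`. -/
def gradFrob {d N : ℕ} (w : EuclideanSpace ℝ (Fin d) → EuclideanSpace ℝ (Fin N))
    (x : EuclideanSpace ℝ (Fin d)) : ℝ :=
  Real.sqrt (∑ α : Fin N, ∑ i : Fin d, (fderiv ℝ w x (EuclideanSpace.single i 1) α) ^ 2)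

/-- Frobenius norm of the second derivative array of `w` at `x`. -/
def hessFrob {d N : ℕ} (w : EuclideanSpace ℝ (Fin d) → EuclideanSpace ℝ (Fin N))
    (x : EuclideanSpace ℝ (Fin d)) : ℝ :=
  Real.sqrt (∑ α : Fin N, ∑ i : Fin d, ∑ j : Fin d,
    (iteratedFDeriv ℝ 2 w x
      ![EuclideanSpace.single i 1, EuclideanSpace.single j 1] α) ^ 2)


lemma hessFrob_eq {d N : ℕ} (w : EuclideanSpace ℝ (Fin d) → EuclideanSpace ℝ (Fin N)) :
    hessFrob w = fun x => Real.sqrt (∑ α : Fin N, ∑ i : Fin d, ∑ j : Fin d,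
      (fderiv ℝ (fderiv ℝ w) x (EuclideanSpace.single i 1) (EuclideanSpace.single j 1) α) ^ 2) := by
  funext x
  simp [hessFrob, iteratedFDeriv_two_apply]

lemma hessFrob_nonneg {d N : ℕ} (w : EuclideanSpace ℝ (Fin d) → EuclideanSpace ℝ (Fin N)) (x) :
    0 ≤ hessFrob w x := Real.sqrt_nonneg _

lemma gradFrob_nonneg {d N : ℕ} (w : EuclideanSpace ℝ (Fin d) → EuclideanSpace ℝ (Fin N)) (x) :
    0 ≤ gradFrob w x := Real.sqrt_nonneg _

lemma measurable_hessFrob {d N : ℕ} (w : EuclideanSpace ℝ (Fin d) → EuclideanSpace ℝ (Fin N)) :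
    Measurable (hessFrob w) := by
  rw [hessFrob_eq]
  refine Measurable.sqrt ?_
  refine Finset.measurable_sum _ fun α _ => Finset.measurable_sum _ fun i _ =>
    Finset.measurable_sum _ fun j _ => Measurable.pow_const ?_ 2
  have h1 : Measurable fun x => fderiv ℝ (fderiv ℝ w) x (EuclideanSpace.single i 1) :=
    measurable_fderiv_apply_const ℝ _ _
  have h2 : Continuous fun L : EuclideanSpace ℝ (Fin d) →L[ℝ] EuclideanSpace ℝ (Fin N) =>
      L (EuclideanSpace.single j 1) α := by fun_prop
  exact h2.measurable.comp h1

lemma measurable_gradFrob {d N : ℕ} (w : EuclideanSpace ℝ (Fin d) → EuclideanSpace ℝ (Fin N)) :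
    Measurable (gradFrob w) := by
  unfold gradFrob
  refine Measurable.sqrt ?_
  refine Finset.measurable_sum _ fun α _ => Finset.measurable_sum _ fun i _ =>
    Measurable.pow_const ?_ 2
  have h1 : Measurable fun x => fderiv ℝ w x (EuclideanSpace.single i 1) :=
    measurable_fderiv_apply_const ℝ _ _
  have h2 : Continuous fun L : EuclideanSpace ℝ (Fin N) => L α := by fun_prop
  exact h2.measurable.comp h1

lemma continuousOn_hessFrob {d N : ℕ} {w : EuclideanSpace ℝ (Fin d) → EuclideanSpace ℝ (Fin N)}
    {U} (hU : IsOpen U) (hw : ContDiffOn ℝ 2 w U) : ContinuousOn (hessFrob w) U := by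
  have h1 : ContDiffOn ℝ 1 (fderiv ℝ w) U := hw.fderiv_of_isOpen hU (by norm_num)
  have h2 : ContinuousOn (fderiv ℝ (fderiv ℝ w)) U := h1.continuousOn_fderiv_of_isOpen hU le_rfl
  rw [hessFrob_eq]
  have h3 : Continuous fun L : EuclideanSpace ℝ (Fin d) →L[ℝ] EuclideanSpace ℝ (Fin d) →L[ℝ]
      EuclideanSpace ℝ (Fin N) => Real.sqrt (∑ α : Fin N, ∑ i : Fin d, ∑ j : Fin d,
      (L (EuclideanSpace.single i 1) (EuclideanSpace.single j 1) α) ^ 2) := by fun_prop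
  exact h3.comp_continuousOn h2

lemma continuousOn_gradFrob {d N : ℕ} {w : EuclideanSpace ℝ (Fin d) → EuclideanSpace ℝ (Fin N)}
    {U} (hU : IsOpen U) (hw : ContDiffOn ℝ 2 w U) : ContinuousOn (gradFrob w) U := by
  have h2 : ContinuousOn (fderiv ℝ w) U := hw.continuousOn_fderiv_of_isOpen hU (by norm_num)
  have h3 : Continuous fun L : EuclideanSpace ℝ (Fin d) →L[ℝ]
      EuclideanSpace ℝ (Fin N) => Real.sqrt (∑ α : Fin N, ∑ i : Fin d,
      (L (EuclideanSpace.single i 1) α) ^ 2) := by fun_prop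
  exact h3.comp_continuousOn h2

lemma isOpen_cube {d : ℕ} (c : EuclideanSpace ℝ (Fin d)) (R : ℝ) : IsOpen (cube c R) := by
  have : cube c R = ⋂ i, {x | |x i - c i| < R / 2} := by ext; simp [cube]
  rw [this]
  refine isOpen_iInter_of_finite fun i => isOpen_lt (by fun_prop) (by fun_prop)

lemma isBounded_cube {d : ℕ} (c : EuclideanSpace ℝ (Fin d)) (R : ℝ) :
    Bornology.IsBounded (cube c R) := by
  have h := (PiLp.antilipschitzWith_ofLp 2 (fun _ : Fin d => ℝ)).isBounded_preimage
    (s := Set.pi Set.univ fun i => Metric.closedBall (c i) (R / 2))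
    (Bornology.IsBounded.pi fun i => Metric.isBounded_closedBall)
  refine h.subset fun x hx => ?_
  simp only [Set.mem_preimage, Set.mem_pi, Set.mem_univ, true_imp_iff, Metric.mem_closedBall,
    Real.dist_eq]
  exact fun i => (hx i).le

lemma volume_cube_five {d : ℕ} (c : EuclideanSpace ℝ (Fin d)) (R : ℝ) :
    volume.real (cube c (5 * R)) = 5 ^ d * volume.real (cube c R) := by
  have : cube c (5 * R) = AffineMap.homothety c (5:ℝ) '' cube c R := by
    ext x
    constructor
    · intro hx
      refine ⟨c + (5:ℝ)⁻¹ • (x - c), fun i => ?_, ?_⟩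
      · have := hx i
        simp only [PiLp.add_apply, PiLp.smul_apply, PiLp.sub_apply, smul_eq_mul,
          add_sub_cancel_left, abs_mul]
        norm_num
        linarith
      · simp [AffineMap.homothety_apply]
    · rintro ⟨y, hy, rfl⟩ i
      have := hy i
      simp only [AffineMap.homothety_apply, vsub_eq_sub, vadd_eq_add, PiLp.add_apply,
        PiLp.smul_apply, PiLp.sub_apply, smul_eq_mul, add_sub_cancel_right, abs_mul]
      norm_num
      linarith
  rw [this, measureReal_def, Measure.addHaar_image_homothety, ENNReal.toReal_mul]
  rw [ENNReal.toReal_ofReal (abs_nonneg _), abs_of_nonneg (by positivity)]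
  simp [measureReal_def]

/-- pointwise Jensen -/
lemma pointwise_jensen {E F : Type*} [NormedAddCommGroup E] [NormedSpace ℝ E]
    [NormedAddCommGroup F] [NormedSpace ℝ F] [CompleteSpace F]
    {r : ℝ} (hr : 1 ≤ r) {U : Set E} (hU : IsOpen U) {v : E → F} (hv : ContDiffOn ℝ 1 v U)
    (x h : E) (hx : ∀ s ∈ Set.Icc (0:ℝ) 1, x + s • h ∈ U) :
    ‖v (x + h) - v x‖ₑ ^ r ≤ ∫⁻ s in Set.Ioc (0:ℝ) 1, ‖fderiv ℝ v (x + s • h) h‖ₑ ^ r := by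
  have hcont : ContinuousOn (fun s : ℝ => fderiv ℝ v (x + s • h) h) (Set.Icc 0 1) := by
    have h2 : ContinuousOn (fderiv ℝ v) U := hv.continuousOn_fderiv_of_isOpen hU le_rfl
    have h3 : ContinuousOn (fun s : ℝ => fderiv ℝ v (x + s • h)) (Set.Icc 0 1) :=
      h2.comp (f := fun s : ℝ => x + s • h) (by fun_prop) (fun s hs => hx s hs)
    exact h3.clm_apply continuousOn_const
  have hint : ∫ s in (0:ℝ)..1, fderiv ℝ v (x + s • h) h = v (x + h) - v x := by
    have := intervalIntegral.integral_eq_sub_of_hasDerivAt (a := 0) (b := 1)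
      (f := fun s : ℝ => v (x + s • h)) (f' := fun s : ℝ => fderiv ℝ v (x + s • h) h) ?_ ?_
    · simpa using this
    · intro s hs
      rw [Set.uIcc_of_le zero_le_one] at hs
      have hd : HasFDerivAt v (fderiv ℝ v (x + s • h)) (x + s • h) :=
        ((hv.differentiableOn one_ne_zero).differentiableAt
          (hU.mem_nhds (hx s hs))).hasFDerivAt
      have hl : HasDerivAt (fun s : ℝ => x + s • h) h s := by
        simpa using ((hasDerivAt_id s).smul_const h).const_add x
      exact hd.comp_hasDerivAt s hl
    · apply ContinuousOn.intervalIntegrable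
      rwa [Set.uIcc_of_le zero_le_one]
  have hr0 : 0 < r := by linarith
  rw [intervalIntegral.integral_of_le zero_le_one] at hint
  rw [← hint]
  set g : ℝ → F := fun s => fderiv ℝ v (x + s • h) h
  have hg : AEMeasurable (fun s => ‖g s‖ₑ ^ r) (volume.restrict (Set.Ioc (0:ℝ) 1)) := by
    have : AEStronglyMeasurable g (volume.restrict (Set.Ioc (0:ℝ) 1)) :=
      (hcont.aestronglyMeasurable measurableSet_Icc).mono_measure
        (Measure.restrict_mono Set.Ioc_subset_Icc_self le_rfl)
    exact this.enorm.pow_const r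
  have key := ENNReal.lintegral_mul_norm_pow_le hg (aemeasurable_const (b := (1 : ℝ≥0∞)))
    (p := 1 / r) (q := 1 - 1 / r) (by positivity)
    (by rw [sub_nonneg, div_le_one hr0]; exact hr) (by ring)
  have e1 : ∀ s, (‖g s‖ₑ ^ r) ^ (1 / r) * (1:ℝ≥0∞) ^ (1 - 1 / r) = ‖g s‖ₑ := by
    intro s
    rw [← ENNReal.rpow_mul, mul_one_div_cancel hr0.ne']
    simp
  simp only [e1] at key
  have e2 : ∫⁻ _ in Set.Ioc (0:ℝ) 1, (1:ℝ≥0∞) = 1 := by simp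
  rw [e2, ENNReal.one_rpow, mul_one] at key
  calc _ ≤ ((∫⁻ s in Set.Ioc (0:ℝ) 1, ‖g s‖ₑ ^ r) ^ (1 / r)) ^ r := by
        gcongr
        exact (enorm_integral_le_lintegral_enorm _).trans key
    _ = _ := by
        rw [← ENNReal.rpow_mul, one_div_mul_cancel hr0.ne', ENNReal.rpow_one]

lemma diff_bound {E F : Type*} [NormedAddCommGroup E] [NormedSpace ℝ E]
    [MeasurableSpace E] [BorelSpace E] [SecondCountableTopology E]
    (μ : Measure E) [SFinite μ]
    [NormedAddCommGroup F] [NormedSpace ℝ F] [CompleteSpace F]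
    {r : ℝ} (hr : 1 ≤ r) {U : Set E} (hU : IsOpen U) {v : E → F} (hv : ContDiffOn ℝ 1 v U)
    (h : E) {A : Set E} (hA : MeasurableSet A)
    (hx : ∀ x ∈ A, ∀ s ∈ Set.Icc (0:ℝ) 1, x + s • h ∈ U) {M : ℝ≥0∞}
    (hM : ∀ s ∈ Set.Icc (0:ℝ) 1, ∫⁻ x in A, ‖fderiv ℝ v (x + s • h) h‖ₑ ^ r ∂μ ≤ M) :
    ∫⁻ x in A, ‖v (x + h) - v x‖ₑ ^ r ∂μ ≤ M := by
  borelize F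
  calc _ ≤ ∫⁻ x in A, (∫⁻ s in Set.Ioc (0:ℝ) 1, ‖fderiv ℝ v (x + s • h) h‖ₑ ^ r) ∂μ :=
        setLIntegral_mono' hA fun x hxA => pointwise_jensen hr hU hv x h (hx x hxA)
    _ = ∫⁻ s in Set.Ioc (0:ℝ) 1, ∫⁻ x in A, ‖fderiv ℝ v (x + s • h) h‖ₑ ^ r ∂μ := by
        apply lintegral_lintegral_swap
        apply Measurable.aemeasurable
        have h1 : Measurable fun y => fderiv ℝ v y h := measurable_fderiv_apply_const ℝ v h
        have h2 : Measurable fun q : E × ℝ => q.1 + q.2 • h := by fun_prop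
        exact ((h1.comp h2).enorm).pow_const r
    _ ≤ ∫⁻ s in Set.Ioc (0:ℝ) 1, M :=
        setLIntegral_mono' measurableSet_Ioc fun s hs => hM s (Set.Ioc_subset_Icc_self hs)
    _ = M := by simp

lemma hess_bound {d N : ℕ} (w : EuclideanSpace ℝ (Fin d) → EuclideanSpace ℝ (Fin N))
    (y h : EuclideanSpace ℝ (Fin d)) :
    ‖fderiv ℝ (fderiv ℝ w) y h h‖ ≤ ‖h‖ ^ 2 * hessFrob w y := by
  rw [hessFrob_eq]
  set L := fderiv ℝ (fderiv ℝ w) y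
  have hh : h = ∑ i, h i • EuclideanSpace.single i (1:ℝ) := by
    ext j
    simp [Finset.sum_apply, Pi.single_apply]
  have hexp : ∀ α, L h h α = ∑ i, ∑ j, (h i * h j) *
      L (EuclideanSpace.single i 1) (EuclideanSpace.single j 1) α := by
    intro α
    conv_lhs => rw [hh]
    simp [map_sum, Finset.mul_sum, Finset.sum_apply]
    rw [Finset.sum_comm]
    refine Finset.sum_congr rfl fun i _ => Finset.sum_congr rfl fun j _ => by ring
  have hn : ‖h‖ ^ 2 = ∑ i, h i ^ 2 := by
    rw [EuclideanSpace.norm_sq_eq]; simp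
  rw [EuclideanSpace.norm_eq]
  apply Real.sqrt_le_iff.2 ⟨by positivity, ?_⟩
  rw [mul_pow, Real.sq_sqrt (by positivity), Finset.mul_sum]
  refine Finset.sum_le_sum fun α _ => ?_
  rw [Real.norm_eq_abs, sq_abs, hexp]
  simp only [← Finset.sum_product', ← Finset.univ_product_univ]
  refine (Finset.sum_mul_sq_le_sq_mul_sq _ _ _).trans (le_of_eq ?_)
  congr 1
  rw [hn, sq (∑ i, h i ^ 2), Finset.sum_mul_sum, ← Finset.sum_product']
  simp only [mul_pow]

lemma part1 {d N : ℕ} {r : ℝ} (hr : 1 ≤ r)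
    (cQ : EuclideanSpace ℝ (Fin d)) (R : ℝ) (hR : 0 < R)
    (w : EuclideanSpace ℝ (Fin d) → EuclideanSpace ℝ (Fin N))
    {U : Set (EuclideanSpace ℝ (Fin d))} (hU : IsOpen U)
    (hUc : cube cQ (5 * R) ⊆ U) (hw : ContDiffOn ℝ 2 w U)
    (h : EuclideanSpace ℝ (Fin d)) (hhR : ‖h‖ ≤ R) :
    ∫⁻ x in cube cQ R, ‖w (x + 2 • h) - 2 • w (x + h) + w x‖ₑ ^ r ≤
      ∫⁻ x in cube cQ (5 * R), ENNReal.ofReal (‖h‖ ^ 2 * hessFrob w x) ^ r := by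
  have hin : ∀ x ∈ cube cQ R, ∀ t ∈ Set.Icc (0:ℝ) 2, x + t • h ∈ cube cQ (5 * R) := by
    intro x hx t ht i
    have h1 := hx i
    have h2 : |h i| ≤ R := by
      have := (PiLp.norm_apply_le h i).trans hhR
      rwa [Real.norm_eq_abs] at this
    have h3 : |t * h i| ≤ 2 * R := by
      rw [abs_mul, abs_of_nonneg ht.1]
      exact mul_le_mul ht.2 h2 (abs_nonneg _) (by norm_num)
    simp only [PiLp.add_apply, PiLp.smul_apply, smul_eq_mul]
    rw [abs_lt] at h1 ⊢
    rw [abs_le] at h3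
    constructor <;> linarith
  have hUsh : ∀ a : EuclideanSpace ℝ (Fin d), IsOpen ((fun x => x + a) ⁻¹' U) := fun a =>
    hU.preimage (by fun_prop)
  have hwd : ∀ y ∈ U, DifferentiableAt ℝ w y := fun y hy =>
    (hw.differentiableOn two_ne_zero).differentiableAt (hU.mem_nhds hy)
  have hdw : ContDiffOn ℝ 1 (fderiv ℝ w) U := hw.fderiv_of_isOpen hU (by norm_num)
  have hw1 : ContDiffOn ℝ 1 w U := hw.of_le (by norm_num)
  have hu : ContDiffOn ℝ 1 (fun y => fderiv ℝ w y h) U := hdw.clm_apply contDiffOn_const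
  have hA : MeasurableSet (cube cQ R) := (isOpen_cube cQ R).measurableSet
  have main := diff_bound volume hr (U := U ∩ (fun x => x + h) ⁻¹' U) (hU.inter (hUsh h))
    (v := fun x => w (x + h) - w x) ?_ h hA ?_
    (M := ∫⁻ x in cube cQ (5 * R), ENNReal.ofReal (‖h‖ ^ 2 * hessFrob w x) ^ r) ?_
  · refine le_of_eq_of_le ?_ main
    refine lintegral_congr fun x => ?_
    congr 2
    rw [two_smul, two_smul, ← add_assoc]
    abel
  · refine ContDiffOn.sub ?_ (hw1.mono Set.inter_subset_left)
    exact hw1.comp (by fun_prop) Set.inter_subset_right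
  · intro x hx s hs
    refine ⟨hUc (hin x hx s ⟨hs.1, by linarith [hs.2]⟩), ?_⟩
    have := hUc (hin x hx (s + 1) ⟨by linarith [hs.1], by linarith [hs.2]⟩)
    rw [add_smul, one_smul, ← add_assoc] at this
    exact this
  · intro s hs
    have main2 := diff_bound volume hr (U := (fun x => x + s • h) ⁻¹' U) (hUsh (s • h))
      (v := fun x => fderiv ℝ w (x + s • h) h) ?_ h hA ?_
      (M := ∫⁻ x in cube cQ (5 * R), ENNReal.ofReal (‖h‖ ^ 2 * hessFrob w x) ^ r) ?_
    · refine le_of_eq_of_le ?_ main2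
      refine setLIntegral_congr_fun hA fun x hx => ?_
      have m1 := hUc (hin x hx s ⟨hs.1, by linarith [hs.2]⟩)
      have m2 := hUc (hin x hx (s + 1) ⟨by linarith [hs.1], by linarith [hs.2]⟩)
      rw [add_smul, one_smul, ← add_assoc] at m2
      have d1 := (hwd _ m1)
      have d2 : DifferentiableAt ℝ (fun y => w (y + h)) (x + s • h) :=
        (hwd _ m2).comp (x + s • h) (by fun_prop)
      rw [fderiv_fun_sub d2 d1, fderiv_comp_add_right, add_right_comm x h]
      rfl
    · exact hu.comp (by fun_prop) fun x hx => hx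
    · intro x hx t ht
      have := hUc (hin x hx (t + s) ⟨by linarith [hs.1, ht.1], by linarith [hs.2, ht.2]⟩)
      rw [add_smul, ← add_assoc] at this
      exact this
    · intro t ht
      have hmem : ∀ x ∈ cube cQ R, x + (t + s) • h ∈ cube cQ (5 * R) := fun x hx =>
        hin x hx (t + s) ⟨by linarith [hs.1, ht.1], by linarith [hs.2, ht.2]⟩
      set G : EuclideanSpace ℝ (Fin d) → ℝ≥0∞ :=
        fun x => ENNReal.ofReal (‖h‖ ^ 2 * hessFrob w x) ^ r
      have hB : MeasurableSet (cube cQ (5 * R)) := (isOpen_cube cQ _).measurableSet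
      rw [← lintegral_indicator hB G, ← lintegral_indicator hA,
        ← lintegral_add_right_eq_self ((cube cQ (5 * R)).indicator G) ((t + s) • h)]
      refine lintegral_mono fun x => ?_
      by_cases hx : x ∈ cube cQ R
      · rw [Set.indicator_of_mem hx, Set.indicator_of_mem (hmem x hx)]
        simp only [G]
        gcongr
        rw [← ofReal_norm_eq_enorm]
        apply ENNReal.ofReal_le_ofReal
        have e : fderiv ℝ (fun x => fderiv ℝ w (x + s • h) h) (x + t • h) =
            fderiv ℝ (fun x => fderiv ℝ w x h) (x + (t + s) • h) := by
          rw [fderiv_comp_add_right (f := fun x => fderiv ℝ w x h), add_smul, ← add_assoc]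
        rw [e]
        have hd : DifferentiableAt ℝ (fderiv ℝ w) (x + (t + s) • h) :=
          (hdw.differentiableOn one_ne_zero).differentiableAt (hU.mem_nhds (hUc (hmem x hx)))
        rw [fderiv_clm_apply hd (differentiableAt_const _)]
        simpa using hess_bound w (x + (t + s) • h) h
      · rw [Set.indicator_of_notMem hx]
        exact zero_le

lemma hess_zero {d N : ℕ} (w : EuclideanSpace ℝ (Fin d) → EuclideanSpace ℝ (Fin N))
    {V : Set (EuclideanSpace ℝ (Fin d))} (hV : IsOpen V) (hg : ∀ x ∈ V, gradFrob w x = 0)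
    (x) (hx : x ∈ V) : hessFrob w x = 0 := by
  have h0 : ∀ x ∈ V, fderiv ℝ w x = 0 := by
    intro x hx
    have h1 := hg x hx
    rw [gradFrob, Real.sqrt_eq_zero (by positivity)] at h1
    have h2 : ∀ i, fderiv ℝ w x (EuclideanSpace.single i 1) = 0 := by
      intro i
      ext α
      rw [Finset.sum_eq_zero_iff_of_nonneg (fun _ _ => by positivity)] at h1
      have h3 := h1 α (Finset.mem_univ _)
      rw [Finset.sum_eq_zero_iff_of_nonneg (fun _ _ => by positivity)] at h3
      simpa using h3 i (Finset.mem_univ _)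
    ext1 y
    have hy : y = ∑ i, y i • EuclideanSpace.single i (1:ℝ) := by
      ext j
      simp [Finset.sum_apply, Pi.single_apply]
    rw [hy]
    simp [h2]
  have h1 : fderiv ℝ w =ᶠ[nhds x] fun _ => 0 :=
    Filter.eventuallyEq_of_mem (hV.mem_nhds hx) h0
  rw [hessFrob_eq]
  simp [h1.fderiv_eq]

lemma part2 {d N : ℕ} {p r : ℝ} (hp : 1 < p) (hpr : p ≤ r) (hr : r < 2)
    {V : Set (EuclideanSpace ℝ (Fin d))} (hV : IsOpen V) (hVfin : volume V ≠ ∞)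
    (w : EuclideanSpace ℝ (Fin d) → EuclideanSpace ℝ (Fin N))
    (hgc : ContinuousOn (gradFrob w) V) :
    ENNReal.ofReal (⨍ x in V, hessFrob w x ^ r) ≤
        (⨍⁻ x in V,
            ENNReal.ofReal (hessFrob w x ^ 2) / ENNReal.ofReal (gradFrob w x ^ (2 - p))
              ∂volume) ^ (r / 2) *
          (⨍⁻ x in V,
            ENNReal.ofReal (gradFrob w x ^ (r * (2 - p) / (2 - r))) ∂volume) ^ ((2 - r) / 2) := by
  have hr0 : 0 < r := by linarith
  have h2r : 0 < 2 - r := by linarith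
  have h2p : 0 < 2 - p := by linarith
  have hq : 0 < r * (2 - p) / (2 - r) := by positivity
  have mh := measurable_hessFrob w
  have mg := measurable_gradFrob w
  rw [average_eq', laverage_eq', laverage_eq']
  set ν : Measure (EuclideanSpace ℝ (Fin d)) :=
    ((volume.restrict V) Set.univ)⁻¹ • volume.restrict V with hν
  have hae : ∀ P : EuclideanSpace ℝ (Fin d) → Prop,
      (∀ᵐ x ∂ν, P x) ↔ ∀ᵐ x ∂(volume.restrict V), P x := by
    intro P
    rw [hν, Measure.ae_ennreal_smul_measure_iff]
    simpa using hVfin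
  set f : EuclideanSpace ℝ (Fin d) → ℝ≥0∞ := fun x =>
    ENNReal.ofReal (hessFrob w x ^ 2) / ENNReal.ofReal (gradFrob w x ^ (2 - p)) with hf
  set g : EuclideanSpace ℝ (Fin d) → ℝ≥0∞ := fun x =>
    ENNReal.ofReal (gradFrob w x ^ (r * (2 - p) / (2 - r))) with hg
  have mf : Measurable f := by
    have := mh.pow_const 2
    have := mg.pow_const (2 - p)
    exact Measurable.div (by fun_prop) (by fun_prop)
  have mgg : Measurable g := (mg.pow_const _).ennreal_ofReal
  have hL : ENNReal.ofReal (∫ x, hessFrob w x ^ r ∂ν) ≤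
      ∫⁻ x, ENNReal.ofReal (hessFrob w x ^ r) ∂ν := by
    rw [integral_eq_lintegral_of_nonneg_ae
      (Filter.Eventually.of_forall fun x => Real.rpow_nonneg (hessFrob_nonneg w x) r)
      (mh.pow_const r).aestronglyMeasurable]
    exact ENNReal.ofReal_toReal_le
  refine hL.trans ?_
  by_cases hJ2 : ∫⁻ x, g x ∂ν = 0
  · rw [lintegral_eq_zero_iff mgg] at hJ2
    have h1 : gradFrob w =ᵐ[volume.restrict V] fun _ => 0 := by
      refine (hae _).1 ?_
      filter_upwards [hJ2] with x hx
      simp only [hg, Pi.zero_apply, ENNReal.ofReal_eq_zero] at hx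
      have := le_antisymm hx (Real.rpow_nonneg (gradFrob_nonneg w x) _)
      exact ((Real.rpow_eq_zero (gradFrob_nonneg w x) hq.ne').1 this)
    have h2 := Measure.eqOn_open_of_ae_eq h1 hV hgc continuousOn_const
    have h3 := hess_zero w hV h2
    have h4 : ∫⁻ x, ENNReal.ofReal (hessFrob w x ^ r) ∂ν = 0 := by
      rw [lintegral_eq_zero_iff (mh.pow_const r).ennreal_ofReal]
      refine (hae _).2 ?_
      filter_upwards [ae_restrict_mem hV.measurableSet] with x hx
      simp [h3 x hx, Real.zero_rpow hr0.ne']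
    rw [h4]; exact zero_le
  by_cases hJ1 : ∫⁻ x, f x ∂ν = ∞
  · rw [hJ1, ENNReal.top_rpow_of_pos (by positivity), ENNReal.top_mul]
    · exact le_top
    · rw [Ne, ENNReal.rpow_eq_zero_iff_of_pos (by positivity)]
      exact hJ2
  refine le_trans ?_ (ENNReal.lintegral_mul_norm_pow_le mf.aemeasurable mgg.aemeasurable
    (by positivity) (by positivity) (by ring))
  refine lintegral_mono_ae ?_
  filter_upwards [ae_lt_top mf hJ1] with x hx
  have hh := hessFrob_nonneg w x
  rcases (gradFrob_nonneg w x).eq_or_lt with h0 | h0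
  · have : hessFrob w x = 0 := by
      by_contra hne
      have hpos : 0 < hessFrob w x := lt_of_le_of_ne hh (Ne.symm hne)
      simp only [hf, ← h0, Real.zero_rpow h2p.ne', ENNReal.ofReal_zero] at hx
      rw [ENNReal.div_zero (by simpa using by positivity)] at hx
      exact lt_irrefl _ hx
    simp [this, Real.zero_rpow hr0.ne']
  · simp only [hf, hg]
    rw [← ENNReal.ofReal_div_of_pos (by positivity),
      ENNReal.ofReal_rpow_of_nonneg (by positivity) (by positivity),
      ENNReal.ofReal_rpow_of_nonneg (by positivity) (by positivity),
      ← ENNReal.ofReal_mul (by positivity)]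
    apply le_of_eq
    congr 1
    rw [Real.div_rpow (by positivity) (by positivity), ← Real.rpow_natCast,
      ← Real.rpow_mul hh, ← Real.rpow_mul h0.le, ← Real.rpow_mul h0.le]
    have e1 : ((2:ℕ):ℝ) * (r / 2) = r := by push_cast; ring
    have e2 : r * (2 - p) / (2 - r) * ((2 - r) / 2) = (2 - p) * (r / 2) := by
      field_simp
    rw [e1, e2, div_mul_cancel₀ _ (by positivity)]

/-- Second difference quotients of a `C²` map `w` are controlled by second
derivatives, and the `L^r` norm of `∇²w` is estimated by interpolation:
`⨍_{5Q}|∇²w|^r ≤ (⨍_{5Q}|∇w|^{p−2}|∇²w|²)^{r/2} (⨍_{5Q}|∇w|^{r(2−p)/(2−r)})^{(2−r)/2}`,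
the integral `⨍_{5Q}|∇w|^{p−2}|∇²w|²` being interpreted in `[0,∞]` (it equals
`|∇²w|²/|∇w|^{2−p}` with the conventions `0/0 = 0`, `a/0 = ∞` for `a ≠ 0`). -/
theorem stmt8 (d N : ℕ) (p r : ℝ) (hp : 1 < p) (hpr : p ≤ r) (hr : r < 2)
    (cQ : EuclideanSpace ℝ (Fin d)) (R : ℝ) (hR : 0 < R)
    (w : EuclideanSpace ℝ (Fin d) → EuclideanSpace ℝ (Fin N))
    (hw : ∃ U, IsOpen U ∧ closure (cube cQ (5 * R)) ⊆ U ∧ ContDiffOn ℝ 2 w U)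
    (h : EuclideanSpace ℝ (Fin d)) (hh0 : 0 < ‖h‖) (hhR : ‖h‖ ≤ R) :
    ‖h‖ ^ (-(2 * r)) * ⨍ x in cube cQ R, ‖w (x + 2 • h) - 2 • w (x + h) + w x‖ ^ r ≤
        (5 : ℝ) ^ d * ⨍ x in cube cQ (5 * R), hessFrob w x ^ r ∧
      ENNReal.ofReal (⨍ x in cube cQ (5 * R), hessFrob w x ^ r) ≤
        (⨍⁻ x in cube cQ (5 * R),
            ENNReal.ofReal (hessFrob w x ^ 2) / ENNReal.ofReal (gradFrob w x ^ (2 - p))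
              ∂volume) ^ (r / 2) *
          (⨍⁻ x in cube cQ (5 * R),
            ENNReal.ofReal (gradFrob w x ^ (r * (2 - p) / (2 - r))) ∂volume) ^ ((2 - r) / 2) := by
  obtain ⟨U, hU, hcU, hwU⟩ := hw
  have hUc : cube cQ (5 * R) ⊆ U := subset_closure.trans hcU
  have hb := isBounded_cube cQ (5 * R)
  have hr1 : 1 ≤ r := by linarith
  have hr0 : 0 < r := by linarith
  refine ⟨?_, part2 hp hpr hr (isOpen_cube _ _) hb.measure_lt_top.ne w
    ((continuousOn_gradFrob hU hwU).mono hUc)⟩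
  have P := part1 hr1 cQ R hR w hU hUc hwU h hhR
  have hK : IsCompact (closure (cube cQ (5 * R))) := hb.isCompact_closure
  have hI : IntegrableOn (fun x => hessFrob w x ^ r) (cube cQ (5 * R)) := by
    refine (ContinuousOn.integrableOn_compact hK ?_).mono_set subset_closure
    exact ((continuousOn_hessFrob hU hwU).mono hcU).rpow_const fun x _ => Or.inr hr0.le
  have e : ∀ x, ENNReal.ofReal (‖h‖ ^ 2 * hessFrob w x) ^ r =
      ENNReal.ofReal (‖h‖ ^ (2 * r) * hessFrob w x ^ r) := by
    intro x
    have := hessFrob_nonneg w x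
    rw [ENNReal.ofReal_rpow_of_nonneg (by positivity) hr0.le,
      Real.mul_rpow (by positivity) this, ← Real.rpow_natCast, ← Real.rpow_mul (norm_nonneg _)]
    norm_num
  simp only [e] at P
  rw [← ofReal_integral_eq_lintegral_ofReal (hI.const_mul _)
    (Filter.Eventually.of_forall fun x =>
      mul_nonneg (by positivity) (Real.rpow_nonneg (hessFrob_nonneg w x) r)),
    integral_const_mul] at P
  have hIn : 0 ≤ ∫ x in cube cQ (5 * R), hessFrob w x ^ r :=
    integral_nonneg fun x => Real.rpow_nonneg (hessFrob_nonneg w x) r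
  have Q : ∫ x in cube cQ R, ‖w (x + 2 • h) - 2 • w (x + h) + w x‖ ^ r ≤
      ‖h‖ ^ (2 * r) * ∫ x in cube cQ (5 * R), hessFrob w x ^ r := by
    refine (Real.le_norm_self _).trans ((norm_integral_le_lintegral_norm _).trans ?_)
    refine ENNReal.toReal_le_of_le_ofReal (by positivity) (le_of_eq_of_le ?_ P)
    refine lintegral_congr fun x => ?_
    rw [Real.norm_of_nonneg (by positivity), ← ENNReal.ofReal_rpow_of_nonneg (norm_nonneg _) hr0.le,
      ofReal_norm_eq_enorm]
  rw [setAverage_eq, setAverage_eq, volume_cube_five, smul_eq_mul, smul_eq_mul]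
  have e5 : (5:ℝ) ^ d * ((5 ^ d * volume.real (cube cQ R))⁻¹ *
      ∫ x in cube cQ (5 * R), hessFrob w x ^ r) = (volume.real (cube cQ R))⁻¹ *
        ∫ x in cube cQ (5 * R), hessFrob w x ^ r := by
    rw [mul_inv, ← mul_assoc, ← mul_assoc, mul_inv_cancel₀ (by positivity), one_mul]
  rw [e5]
  calc _ = (volume.real (cube cQ R))⁻¹ * (‖h‖ ^ (-(2 * r)) *
        ∫ x in cube cQ R, ‖w (x + 2 • h) - 2 • w (x + h) + w x‖ ^ r) := by ring
    _ ≤ (volume.real (cube cQ R))⁻¹ * (‖h‖ ^ (-(2 * r)) *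
        (‖h‖ ^ (2 * r) * ∫ x in cube cQ (5 * R), hessFrob w x ^ r)) := by gcongr
    _ = _ := by
        rw [← mul_assoc (‖h‖ ^ (-(2 * r))), ← Real.rpow_add hh0, neg_add_cancel, Real.rpow_zero,
          one_mul]
end
end

section
/- Let n ∈ ℕ, p > 1, α₀, α₁ > 0, and let F : ℝ^n → ℝ be continuously differentiable on ℝ^n and twice continuously differentiable on ℝ^n∖{0}, with α₀|η|^{p−2}|ξ|² ≤ D²F(η)[ξ,ξ] ≤ α₁|η|^{p−2}|ξ|² for all η ≠ 0 and all ξ ∈ ℝ^n. Then there exists c > 0, depending only on p, α₀ and α₁, such that (∇F(η) − ∇F(ξ))·(η − ξ) ≥ c|V(η) − V(ξ)|² for all η, ξ ∈ ℝ^n, where V(η) := |η|^{(p−2)/2}η (V(0) := 0). -/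
open scoped RealInnerProductSpace

noncomputable section

/-- `V(η) = |η|^{(p-2)/2} η` (so that `V(0) = 0`). -/
def Vm (p : ℝ) {n : ℕ} (η : EuclideanSpace ℝ (Fin n)) : EuclideanSpace ℝ (Fin n) :=
  ‖η‖ ^ ((p - 2) / 2) • η

lemma mono_aux (k k' : ℝ → ℝ) (a b : ℝ) (hab : a ≤ b) (hc : Continuous k)
    (hd : ∀ t ∈ Set.Ioo a b, HasDerivAt k (k' t) t ∧ 0 ≤ k' t) : k a ≤ k b := by
  have : MonotoneOn k (Set.Icc a b) := by
    apply monotoneOn_of_deriv_nonneg (convex_Icc a b) hc.continuousOn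
    · intro t ht
      rw [interior_Icc] at ht
      exact (hd t ht).1.differentiableAt.differentiableWithinAt
    · intro t ht
      rw [interior_Icc] at ht
      rw [(hd t ht).1.deriv]
      exact (hd t ht).2
  exact this (Set.left_mem_Icc.2 hab) (Set.right_mem_Icc.2 hab) hab

lemma norm_Vm (p : ℝ) (hp : 1 < p) {n : ℕ} (x : EuclideanSpace ℝ (Fin n)) :
    ‖Vm p x‖ = ‖x‖ ^ (p / 2) := by
  unfold Vm
  rw [norm_smul, Real.norm_of_nonneg (by positivity)]
  rcases (norm_nonneg x).eq_or_lt with h | h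
  · rw [← h, mul_zero, Real.zero_rpow (by linarith)]
  · rw [← Real.rpow_add_one h.ne']
    congr 1; ring

lemma cont_Vm (p : ℝ) (hp : 1 < p) {n : ℕ} :
    Continuous (Vm p : EuclideanSpace ℝ (Fin n) → _) := by
  rw [continuous_iff_continuousAt]
  intro x
  by_cases hx : x = 0
  · subst hx
    have h0 : Vm p (0 : EuclideanSpace ℝ (Fin n)) = 0 := by simp [Vm]
    rw [ContinuousAt, h0, tendsto_zero_iff_norm_tendsto_zero]
    simp_rw [norm_Vm p hp]
    have : Continuous fun x : EuclideanSpace ℝ (Fin n) => ‖x‖ ^ (p / 2) :=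
      continuous_norm.rpow_const (fun _ => Or.inr (by linarith))
    have h := this.tendsto 0
    simpa [Real.zero_rpow (show p / 2 ≠ 0 by linarith)] using h
  · unfold Vm
    exact (continuous_norm.continuousAt.rpow_const (Or.inl (norm_ne_zero_iff.2 hx))).smul
      continuousAt_id

lemma deriv_Vm (p : ℝ) {n : ℕ} (x w e : EuclideanSpace ℝ (Fin n)) (t : ℝ)
    (h : x + t • w ≠ 0) : ∃ d : ℝ, HasDerivAt (fun t : ℝ => ⟪Vm p (x + t • w), e⟫) d t ∧
      d ≤ (|(p - 2) / 2| + 1) * ‖x + t • w‖ ^ ((p - 2) / 2) * ‖w‖ * ‖e‖ := by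
  set s := (p - 2) / 2 with hs
  have hγ : HasDerivAt (fun t : ℝ => x + t • w) w t := by
    simpa using ((hasDerivAt_id t).smul_const w).const_add x
  have hN := (hγ.norm_sq).rpow_const (p := s / 2) (Or.inl (by positivity))
  have hE := hγ.inner ℝ (hasDerivAt_const t e)
  have hM := hN.mul hE
  have key : (fun t : ℝ => ⟪Vm p (x + t • w), e⟫) =
      (fun t : ℝ => (‖x + t • w‖ ^ 2) ^ (s / 2)) * fun t : ℝ => ⟪x + t • w, e⟫ := by
    funext t
    simp only [Vm, Pi.mul_apply, real_inner_smul_left, ← hs]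
    rw [← Real.rpow_natCast, ← Real.rpow_mul (norm_nonneg _)]
    congr 2; push_cast; ring
  refine ⟨_, key ▸ hM, ?_⟩
  set y := x + t • w
  have hy : 0 < ‖y‖ := norm_pos_iff.2 h
  have e1 : (‖y‖ ^ 2) ^ (s / 2) = ‖y‖ ^ s := by
    rw [← Real.rpow_natCast, ← Real.rpow_mul (norm_nonneg _)]
    congr 1; push_cast; ring
  have e2 : (‖y‖ ^ 2) ^ (s / 2 - 1) = ‖y‖ ^ s / ‖y‖ ^ 2 := by
    rw [Real.rpow_sub_one (by positivity), e1]
  rw [e1, e2]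
  have i1 := abs_real_inner_le_norm y w
  have i2 := abs_real_inner_le_norm y e
  have i3 := real_inner_le_norm w e
  have hA : 0 < ‖y‖ ^ s := Real.rpow_pos_of_pos hy s
  have b1 : s * (⟪y, w⟫ * ⟪y, e⟫) ≤ |s| * ((‖y‖ * ‖w‖) * (‖y‖ * ‖e‖)) := by
    refine (le_abs_self _).trans ?_
    rw [abs_mul, abs_mul]
    gcongr
  have b2 : ‖y‖ ^ s / ‖y‖ ^ 2 * (s * (⟪y, w⟫ * ⟪y, e⟫)) ≤ |s| * ‖y‖ ^ s * ‖w‖ * ‖e‖ := by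
    refine (mul_le_mul_of_nonneg_left b1 (by positivity)).trans (le_of_eq ?_)
    field_simp
  have b3 : ‖y‖ ^ s * ⟪w, e⟫ ≤ ‖y‖ ^ s * (‖w‖ * ‖e‖) := by gcongr
  simp only [inner_zero_right, zero_add]
  linarith

/-- Strong monotonicity of the gradient of a `C¹` potential, `C²` away from
the origin, with `p`-uniform Hessian bounds: `(∇F(η)-∇F(ξ))·(η-ξ) ≥ c|V(η)-V(ξ)|²`, the
constant `c` depending only on `p, α₀, α₁`. -/
theorem stmt14 (p α₀ α₁ : ℝ) (hp : 1 < p) (hα₀ : 0 < α₀) (hα₁ : 0 < α₁) :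
    ∃ c : ℝ, 0 < c ∧
      ∀ (n : ℕ) (F : EuclideanSpace ℝ (Fin n) → ℝ),
        ContDiff ℝ 1 F →
        ContDiffOn ℝ 2 F {0}ᶜ →
        (∀ η : EuclideanSpace ℝ (Fin n), η ≠ 0 → ∀ ξ,
          α₀ * ‖η‖ ^ (p - 2) * ‖ξ‖ ^ 2 ≤ iteratedFDeriv ℝ 2 F η ![ξ, ξ] ∧
          iteratedFDeriv ℝ 2 F η ![ξ, ξ] ≤ α₁ * ‖η‖ ^ (p - 2) * ‖ξ‖ ^ 2) →
        ∀ η ξ : EuclideanSpace ℝ (Fin n),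
          c * ‖Vm p η - Vm p ξ‖ ^ 2 ≤ ⟪gradient F η - gradient F ξ, η - ξ⟫ := by
  set C : ℝ := |(p - 2) / 2| + 1 with hC
  have hC0 : 0 < C := by positivity
  refine ⟨α₀ / C ^ 2, by positivity, ?_⟩
  intro n F hF1 hF2 hH η ξ
  by_cases hηξ : η = ξ
  · simp [hηξ]
  set w := η - ξ with hw
  have hw0 : w ≠ 0 := sub_ne_zero.2 hηξ
  set e := Vm p η - Vm p ξ with he
  set k : ℝ → ℝ := fun t => ‖e‖ ^ 2 / 2 * t + C ^ 2 / (2 * α₀) * fderiv ℝ F (ξ + t • w) w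
    - ⟪Vm p (ξ + t • w), e⟫ with hk
  have hγc : Continuous fun t : ℝ => ξ + t • w := by fun_prop
  have hkc : Continuous k := by
    have h1 : Continuous fun t : ℝ => fderiv ℝ F (ξ + t • w) w :=
      ((hF1.continuous_fderiv (by simp)).comp hγc).clm_apply continuous_const
    have h2 : Continuous fun t : ℝ => ⟪Vm p (ξ + t • w), e⟫ :=
      ((cont_Vm p hp).comp hγc).inner continuous_const
    fun_prop
  have hkd : ∀ t : ℝ, ξ + t • w ≠ 0 → ∃ d, HasDerivAt k d t ∧ 0 ≤ d := by
    intro t ht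
    obtain ⟨d, hd, hdle⟩ := deriv_Vm p ξ w e t ht
    have hγ : HasDerivAt (fun t : ℝ => ξ + t • w) w t := by
      simpa using ((hasDerivAt_id t).smul_const w).const_add ξ
    have hF : ContDiffAt ℝ 2 F (ξ + t • w) :=
      hF2.contDiffAt (isOpen_compl_singleton.mem_nhds ht)
    have hD : DifferentiableAt ℝ (fderiv ℝ F) (ξ + t • w) :=
      (hF.fderiv_right (m := 1) (by norm_num)).differentiableAt (by simp)
    have h1 : HasDerivAt (fun t : ℝ => fderiv ℝ F (ξ + t • w) w)
        (fderiv ℝ (fderiv ℝ F) (ξ + t • w) w w) t := by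
      have h0 : HasDerivAt (fun t : ℝ => fderiv ℝ F (ξ + t • w))
        (fderiv ℝ (fderiv ℝ F) (ξ + t • w) w) t := hD.hasFDerivAt.comp_hasDerivAt t hγ
      simpa using h0.clm_apply (hasDerivAt_const t w)
    have h2 : HasDerivAt k (‖e‖ ^ 2 / 2 * 1 +
        C ^ 2 / (2 * α₀) * fderiv ℝ (fderiv ℝ F) (ξ + t • w) w w - d) t :=
      (((hasDerivAt_id' t).const_mul (‖e‖ ^ 2 / 2)).fun_add
        (h1.const_mul (C ^ 2 / (2 * α₀)))).fun_sub hd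
    refine ⟨_, h2, ?_⟩
    have h3 := (hH _ ht w).1
    rw [iteratedFDeriv_two_apply] at h3
    simp only [Matrix.cons_val_zero, Matrix.cons_val_one] at h3
    have hA : ‖ξ + t • w‖ ^ (p - 2) = (‖ξ + t • w‖ ^ ((p - 2) / 2)) ^ 2 := by
      rw [← Real.rpow_natCast, ← Real.rpow_mul (norm_nonneg _)]
      congr 1; push_cast; ring
    rw [hA] at h3
    set A := ‖ξ + t • w‖ ^ ((p - 2) / 2)
    have h4 : C ^ 2 / (2 * α₀) * (α₀ * A ^ 2 * ‖w‖ ^ 2) ≤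
      C ^ 2 / (2 * α₀) * (fderiv ℝ (fderiv ℝ F) (ξ + t • w) w) w :=
      mul_le_mul_of_nonneg_left h3 (by positivity)
    have h5 : C ^ 2 / (2 * α₀) * (α₀ * A ^ 2 * ‖w‖ ^ 2) = (C * A * ‖w‖) ^ 2 / 2 := by
      field_simp
    have h6 := sq_nonneg (C * A * ‖w‖ - ‖e‖)
    rw [← hC] at hdle
    nlinarith only [h4, h5, h6, hdle]
  choose! k' hk' using hkd
  have hk01 : k 0 ≤ k 1 := by
    by_cases hz : ∃ t₀ ∈ Set.Ioo (0 : ℝ) 1, ξ + t₀ • w = 0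
    · obtain ⟨t₀, ht₀, hz⟩ := hz
      have huniq : ∀ t, t ≠ t₀ → ξ + t • w ≠ 0 := by
        intro t ht h
        apply ht
        have : (t - t₀) • w = 0 := by
          rw [sub_smul, sub_eq_zero]; exact add_left_cancel (h.trans hz.symm)
        rcases smul_eq_zero.1 this with h | h
        · linarith
        · exact absurd h hw0
      exact (mono_aux k k' 0 t₀ ht₀.1.le hkc fun t ht => hk' t (huniq t ht.2.ne)).trans
        (mono_aux k k' t₀ 1 ht₀.2.le hkc fun t ht => hk' t (huniq t ht.1.ne'))
    · push Not at hz
      exact mono_aux k k' 0 1 zero_le_one hkc fun t ht => hk' t (hz t ht)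
  have hee : ⟪Vm p η, e⟫ - ⟪Vm p ξ, e⟫ = ‖e‖ ^ 2 := by
    rw [← inner_sub_left, ← he, real_inner_self_eq_norm_sq]
  have hg : ⟪gradient F η - gradient F ξ, w⟫ = fderiv ℝ F η w - fderiv ℝ F ξ w := by
    rw [inner_sub_left]
    simp [gradient, InnerProductSpace.toDual_symm_apply]
  have hη : ξ + w = η := by rw [hw]; abel
  simp only [hk, zero_smul, add_zero, one_smul, hη, mul_zero, mul_one, zero_add] at hk01
  rw [hg]
  have hfin : ‖e‖ ^ 2 / 2 ≤ C ^ 2 / (2 * α₀) * (fderiv ℝ F η w - fderiv ℝ F ξ w) := by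
    linarith
  have := mul_le_mul_of_nonneg_left hfin (show 0 ≤ 2 * α₀ / C ^ 2 by positivity)
  calc _ = 2 * α₀ / C ^ 2 * (‖e‖ ^ 2 / 2) := by ring
    _ ≤ _ := this
    _ = _ := by field_simp
end
end

section
/- For every p > 1 and n ∈ ℕ there exist constants c, C > 0, depending only on p, such that for all A, B ∈ ℝ^n with (A,B) ≠ (0,0): c|V(A) − V(B)|² ≤ (|A| + |B|)^{p−2}|A − B|² ≤ C|V(A) − V(B)|², where V(η) := |η|^{(p−2)/2}η (V(0) := 0). -/
noncomputable section

lemma aux_pow (s x : ℝ) (h1 : 1 / 2 ≤ x) (h2 : x ≤ 2) :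
    (2:ℝ) ^ (-|s|) ≤ x ^ s ∧ x ^ s ≤ (2:ℝ) ^ |s| := by
  have hx : 0 < x := by linarith
  have hl : |Real.log x| ≤ Real.log 2 := by
    rw [abs_le]
    constructor
    · rw [← Real.log_inv]
      exact Real.log_le_log (by norm_num) (by linarith)
    · exact Real.log_le_log hx h2
  have h3 : |Real.log x * s| ≤ Real.log 2 * |s| := by
    rw [abs_mul]
    exact mul_le_mul_of_nonneg_right hl (abs_nonneg s)
  rw [abs_le] at h3
  rw [Real.rpow_def_of_pos hx, Real.rpow_def_of_pos two_pos, Real.rpow_def_of_pos two_pos,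
    Real.exp_le_exp, Real.exp_le_exp]
  constructor <;> linarith [h3.1, h3.2]

lemma aux_real (s : ℝ) (hs : -1 < s) : ∃ c C : ℝ, 0 < c ∧ 0 < C ∧
    ∀ r t : ℝ, 0 ≤ r → r ≤ 1 → 0 ≤ t → t ≤ 4 * r →
      (1 - r ^ s * r) ^ 2 + r ^ s * t ≤ c * ((1 - r) ^ 2 + t) ∧
      (1 - r) ^ 2 + t ≤ C * ((1 - r ^ s * r) ^ 2 + r ^ s * t) := by
  obtain ⟨K, hK⟩ : ∃ K, K = 16 + (2:ℝ) ^ |s| := ⟨_, rfl⟩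
  have h2p : (0:ℝ) < 2 ^ |s| := by positivity
  have hq : 0 < s + 1 := by linarith
  have hK0 : 0 < K := by rw [hK]; positivity
  obtain ⟨m, hm⟩ : ∃ m, m = min 1 (s + 1) := ⟨_, rfl⟩
  obtain ⟨M, hM⟩ : ∃ M, M = max 1 (s + 1) := ⟨_, rfl⟩
  have hm0 : 0 < m := by rw [hm]; exact lt_min one_pos hq
  have hM0 : 0 < M := by rw [hM]; exact lt_max_of_lt_left one_pos
  refine ⟨M ^ 2 + K, (1 + K) / m ^ 2 + K, by positivity, by positivity, ?_⟩
  intro r t hr0 hr1 ht0 ht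
  have hRr : r ^ s * r = r ^ (s + 1) := by
    rcases hr0.eq_or_lt with h | h
    · rw [← h, Real.zero_rpow hq.ne', mul_zero]
    · rw [Real.rpow_add_one h.ne']
  have hR0 : 0 ≤ r ^ s := Real.rpow_nonneg hr0 s
  have hQ1 : r ^ s * r ≤ 1 := by rw [hRr]; exact Real.rpow_le_one hr0 hr1 hq.le
  have hb : m * (1 - r) ≤ 1 - r ^ s * r ∧ 1 - r ^ s * r ≤ M * (1 - r) := by
    rw [hRr]
    rcases le_total 1 (s + 1) with h | h
    · have e1 := one_add_mul_self_le_rpow_one_add (s := r - 1) (by linarith) h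
      have e2 := Real.rpow_le_rpow_of_exponent_ge' hr0 hr1 zero_le_one h
      rw [Real.rpow_one] at e2
      rw [hm, hM, min_eq_left h, max_eq_right h]
      rw [add_sub_cancel] at e1
      constructor <;> linarith
    · have e1 := rpow_one_add_le_one_add_mul_self (s := r - 1) (by linarith) hq.le h
      have e2 := Real.rpow_le_rpow_of_exponent_ge' hr0 hr1 hq.le h
      rw [Real.rpow_one] at e2
      rw [hm, hM, min_eq_right h, max_eq_left h]
      rw [add_sub_cancel] at e1
      constructor <;> linarith
  have hw : r ^ s * t ≤ K * ((1 - r) ^ 2 + t) ∧ t ≤ K * ((1 - r) ^ 2 + r ^ s * t) := by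
    have hX := sq_nonneg (1 - r)
    have hRt := mul_nonneg hR0 ht0
    rcases le_total (1 / 2) r with h | h
    · obtain ⟨e1, e2⟩ := aux_pow s r h (by linarith)
      have e3 := mul_le_mul_of_nonneg_right e2 ht0
      have e4 := mul_le_mul_of_nonneg_right e1 ht0
      have e5 := mul_le_mul_of_nonneg_left e4 h2p.le
      rw [Real.rpow_neg two_pos.le, ← mul_assoc, mul_inv_cancel₀ h2p.ne', one_mul] at e5
      have e6 := mul_nonneg h2p.le hX
      rw [hK]
      constructor <;> nlinarith
    · have hX4 : 1 / 4 ≤ (1 - r) ^ 2 := by nlinarith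
      have e1 : r ^ s * t ≤ 4 := by nlinarith
      have e6 := mul_nonneg h2p.le hX
      have e7 := mul_nonneg h2p.le ht0
      have e8 := mul_nonneg h2p.le hRt
      rw [hK]
      constructor <;> nlinarith
  have hX := sq_nonneg (1 - r)
  have hRt := mul_nonneg hR0 ht0
  have u1 : (1 - r ^ s * r) ^ 2 ≤ M ^ 2 * (1 - r) ^ 2 := by
    rw [← mul_pow]; exact pow_le_pow_left₀ (by linarith) hb.2 2
  have u2 : m ^ 2 * (1 - r) ^ 2 ≤ (1 - r ^ s * r) ^ 2 := by
    rw [← mul_pow]; exact pow_le_pow_left₀ (mul_nonneg hm0.le (by linarith)) hb.1 2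
  constructor
  · have := mul_nonneg (sq_nonneg M) ht0
    linarith [hw.1]
  · have u3 : (1 + K) * (1 - r) ^ 2 ≤ (1 + K) / m ^ 2 * (1 - r ^ s * r) ^ 2 := by
      rw [div_mul_eq_mul_div, le_div_iff₀ (by positivity)]
      nlinarith
    have v1 : 0 ≤ (1 + K) / m ^ 2 * (r ^ s * t) := by positivity
    have v2 : 0 ≤ K * (1 - r ^ s * r) ^ 2 := by positivity
    linarith [hw.2]

lemma aux_vec (p : ℝ) (hp : 1 < p) : ∃ c C : ℝ, 0 < c ∧ 0 < C ∧
    ∀ (n : ℕ) (A B : EuclideanSpace ℝ (Fin n)), 0 < ‖A‖ → ‖B‖ ≤ ‖A‖ →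
      ‖Vm p A - Vm p B‖ ^ 2 ≤ c * ((‖A‖ + ‖B‖) ^ (p - 2) * ‖A - B‖ ^ 2) ∧
      (‖A‖ + ‖B‖) ^ (p - 2) * ‖A - B‖ ^ 2 ≤ C * ‖Vm p A - Vm p B‖ ^ 2 := by
  obtain ⟨s, hs⟩ : ∃ s, s = (p - 2) / 2 := ⟨_, rfl⟩
  obtain ⟨c, C, hc, hC, H⟩ := aux_real s (by linarith)
  obtain ⟨L, hL⟩ : ∃ L, L = (2:ℝ) ^ |p - 2| := ⟨_, rfl⟩
  have hL0 : 0 < L := by rw [hL]; positivity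
  refine ⟨c * L, C * L, by positivity, by positivity, ?_⟩
  intro n A B hA hBA
  obtain ⟨a, ha⟩ : ∃ a, a = ‖A‖ := ⟨_, rfl⟩
  obtain ⟨r, hr⟩ : ∃ r, r = ‖B‖ / ‖A‖ := ⟨_, rfl⟩
  have hB : ‖B‖ = r * a := by rw [hr, ha]; field_simp
  have hr0 : 0 ≤ r := by rw [hr]; positivity
  have hr1 : r ≤ 1 := by rw [hr]; exact div_le_one_of_le₀ hBA hA.le
  obtain ⟨t, ht⟩ : ∃ t, t = 2 * (r - inner ℝ A B / a ^ 2) := ⟨_, rfl⟩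
  rw [← ha] at hA
  have hin : inner ℝ A B = a ^ 2 * (r - t / 2) := by rw [ht]; field_simp; ring
  have hi := abs_le.1 (abs_real_inner_le_norm A B)
  rw [← ha, hB, hin] at hi
  have ha2 : 0 < a ^ 2 := by positivity
  have ht0 : 0 ≤ t := by
    have : 0 ≤ a ^ 2 * t := by linarith [hi.2]
    exact nonneg_of_mul_nonneg_right this ha2
  have ht4 : t ≤ 4 * r := by
    have : a ^ 2 * t ≤ a ^ 2 * (4 * r) := by linarith [hi.1]
    exact le_of_mul_le_mul_left this ha2
  obtain ⟨h1, h2⟩ := H r t hr0 hr1 ht0 ht4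
  have eAB : ‖A - B‖ ^ 2 = a ^ 2 * ((1 - r) ^ 2 + t) := by
    rw [norm_sub_sq_real, hin, ← ha, hB]; ring
  have hV : ‖Vm p A - Vm p B‖ ^ 2
      = (a ^ s) ^ 2 * a ^ 2 * ((1 - r ^ s * r) ^ 2 + r ^ s * t) := by
    unfold Vm
    rw [norm_sub_sq_real, norm_smul, norm_smul, real_inner_smul_left, real_inner_smul_right,
      hin, Real.norm_of_nonneg (by positivity), Real.norm_of_nonneg (by positivity), ← ha, hB, ← hs,
      Real.mul_rpow hr0 hA.le]
    ring
  have hS : (‖A‖ + ‖B‖) ^ (p - 2) = (a ^ s) ^ 2 * (1 + r) ^ (p - 2) := by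
    rw [← ha, hB, show a + r * a = a * (1 + r) by ring, Real.mul_rpow hA.le (by linarith),
      ← Real.rpow_natCast, ← Real.rpow_mul hA.le]
    congr 2
    rw [hs]; push_cast; ring
  obtain ⟨w1, w2⟩ := aux_pow (p - 2) (1 + r) (by linarith) (by linarith)
  rw [Real.rpow_neg two_pos.le, ← hL] at w1
  rw [← hL] at w2
  rw [hV, hS, eAB]
  obtain ⟨W, hW⟩ : ∃ W, W = (1 + r) ^ (p - 2) := ⟨_, rfl⟩
  rw [← hW] at w1 w2 ⊢
  have w3 : 1 ≤ L * W := by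
    have := mul_le_mul_of_nonneg_left w1 hL0.le
    rwa [mul_inv_cancel₀ hL0.ne'] at this
  have hP : 0 < (a ^ s) ^ 2 * a ^ 2 := by positivity
  obtain ⟨P, hPe⟩ : ∃ P, P = (a ^ s) ^ 2 * a ^ 2 := ⟨_, rfl⟩
  have hX : 0 ≤ (1 - r) ^ 2 + t := by positivity
  constructor
  · calc _ ≤ (a ^ s) ^ 2 * a ^ 2 * (c * ((1 - r) ^ 2 + t)) := mul_le_mul_of_nonneg_left h1 hP.le
      _ = 1 * ((a ^ s) ^ 2 * a ^ 2 * (c * ((1 - r) ^ 2 + t))) := (one_mul _).symm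
      _ ≤ (L * W) * ((a ^ s) ^ 2 * a ^ 2 * (c * ((1 - r) ^ 2 + t))) :=
        mul_le_mul_of_nonneg_right w3 (by positivity)
      _ = _ := by ring
  · calc _ = W * ((a ^ s) ^ 2 * a ^ 2 * ((1 - r) ^ 2 + t)) := by ring
      _ ≤ L * ((a ^ s) ^ 2 * a ^ 2 * ((1 - r) ^ 2 + t)) :=
        mul_le_mul_of_nonneg_right w2 (by positivity)
      _ ≤ L * ((a ^ s) ^ 2 * a ^ 2 * (C * ((1 - r ^ s * r) ^ 2 + r ^ s * t))) := by gcongr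
      _ = _ := by ring

/-- The equivalence `|V(A)-V(B)|² ≈ (|A|+|B|)^{p-2}|A-B|²`, with constants
depending only on `p`. -/
theorem stmt15 (p : ℝ) (hp : 1 < p) :
    ∃ c C : ℝ, 0 < c ∧ 0 < C ∧
      ∀ (n : ℕ) (A B : EuclideanSpace ℝ (Fin n)), (A, B) ≠ (0, 0) →
        c * ‖Vm p A - Vm p B‖ ^ 2 ≤ (‖A‖ + ‖B‖) ^ (p - 2) * ‖A - B‖ ^ 2 ∧
        (‖A‖ + ‖B‖) ^ (p - 2) * ‖A - B‖ ^ 2 ≤ C * ‖Vm p A - Vm p B‖ ^ 2 := by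
  obtain ⟨c, C, hc, hC, H⟩ := aux_vec p hp
  refine ⟨c⁻¹, C, by positivity, hC, ?_⟩
  intro n A B hAB
  rcases le_total ‖B‖ ‖A‖ with h | h
  · have hA : 0 < ‖A‖ := by
      by_contra h0
      have h1 : ‖A‖ = 0 := le_antisymm (not_lt.1 h0) (norm_nonneg A)
      have h2 : ‖B‖ = 0 := le_antisymm (h1 ▸ h) (norm_nonneg B)
      exact hAB (by rw [norm_eq_zero.1 h1, norm_eq_zero.1 h2])
    obtain ⟨e1, e2⟩ := H n A B hA h
    exact ⟨(inv_mul_le_iff₀ hc).2 e1, e2⟩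
  · have hB : 0 < ‖B‖ := by
      by_contra h0
      have h1 : ‖B‖ = 0 := le_antisymm (not_lt.1 h0) (norm_nonneg B)
      have h2 : ‖A‖ = 0 := le_antisymm (h1 ▸ h) (norm_nonneg A)
      exact hAB (by rw [norm_eq_zero.1 h1, norm_eq_zero.1 h2])
    obtain ⟨e1, e2⟩ := H n B A hB h
    rw [norm_sub_rev (Vm p B), norm_sub_rev B A, add_comm ‖B‖] at e1 e2
    exact ⟨(inv_mul_le_iff₀ hc).2 e1, e2⟩
end
end
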